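/- arXiv:1404.2192 — 2 statements merged into one kernel-verified Lean document; each statement's English description precedes it below -/
import Mathlib

section
/- Let h : ℝ → ℝ be defined by h(u) = (7 + 44u² + 40u⁴)/(3√(1+u²)) − (16/(3π))·( 4/3 + 5u² + u·(3 + 5u²)·arctan(u) ). Then h is integrable on ℝ, ∫_ℝ h(u) du = 1/6, and for every nonzero real number r the Fourier transform ĥ(r) = ∫_ℝ h(u)·e^{−2πiru} du equals 2·( 10/(π²r²) + 1 )·K₀(2π|r|) + ( 4·(3π²r² + 5)/(π³|r|³) )·K₁(2π|r|) − ( 32/(3π·√|r|) )·K_{7/2}(2π|r|). -/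
open Real MeasureTheory

/-- The function `h` from the Poincaré-series solution. -/
noncomputable def hfun (u : ℝ) : ℝ :=
  (7 + 44 * u ^ 2 + 40 * u ^ 4) / (3 * Real.sqrt (1 + u ^ 2)) -
    16 / (3 * π) * (4 / 3 + 5 * u ^ 2 + u * (3 + 5 * u ^ 2) * Real.arctan u)

/-- Modified Bessel function `K₀`. -/
noncomputable def K0 (x : ℝ) : ℝ := ∫ t in Set.Ioi (0 : ℝ), Real.exp (-x * Real.cosh t)

/-- Modified Bessel function `K₁`. -/
noncomputable def K1 (x : ℝ) : ℝ :=
  ∫ t in Set.Ioi (0 : ℝ), Real.exp (-x * Real.cosh t) * Real.cosh t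

/-- Modified Bessel function `K_{7/2}`. -/
noncomputable def K7half (x : ℝ) : ℝ :=
  Real.sqrt (π / (2 * x)) * (1 + 6 / x + 15 / x ^ 2 + 15 / x ^ 3) * Real.exp (-x)


lemma aux_kernel_integrable {s : ℝ} (hs : 0 < s) :
    Integrable (fun u : ℝ => s / (s ^ 2 + u ^ 2)) := by
  have h := (integrable_inv_one_add_sq.comp_div hs.ne').const_mul (1 / s)
  refine h.congr (Filter.Eventually.of_forall fun u => ?_)
  have : s ^ 2 + u ^ 2 ≠ 0 := by positivity
  have : 1 + (u / s) ^ 2 ≠ 0 := by positivity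
  simp only
  field_simp

lemma aux_exp_integrable {s : ℝ} (hs : 0 < s) :
    Integrable (fun x : ℝ => Complex.exp (-(2 * π * s * |x| : ℝ))) := by
  have hp := pi_pos
  have h1 : Integrable (fun x : ℝ => Real.exp (-(2 * π * s) * |x|)) := by
    have h2 := (integrable_inv_one_add_sq.comp_mul_left' (R := 2 * π * s)
      (by positivity)).const_mul 2
    refine h2.mono' (Continuous.aestronglyMeasurable (by fun_prop)) ?_
    refine Filter.Eventually.of_forall fun x => ?_
    have h3 := quadratic_le_exp_of_nonneg (x := 2 * π * s * |x|) (by positivity)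
    have h4 : 0 ≤ 2 * π * s * |x| := by positivity
    have h5 : (2 * π * s * x) ^ 2 = (2 * π * s * |x|) ^ 2 := by
      rw [mul_pow, mul_pow _ |x|, sq_abs]
    rw [Real.norm_eq_abs, abs_of_pos (Real.exp_pos _), neg_mul, Real.exp_neg, h5,
      inv_eq_one_div, inv_eq_one_div, ← mul_div_assoc, div_le_div_iff₀ (Real.exp_pos _) (by positivity)]
    nlinarith
  refine h1.ofReal.congr (Filter.Eventually.of_forall fun u => ?_)
  simp [neg_mul]

open FourierTransform in
lemma aux_fourier_exp {s : ℝ} (hs : 0 < s) (u : ℝ) :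
    𝓕 (fun x : ℝ => Complex.exp (-(2 * π * s * |x| : ℝ))) u
      = ((1 / π * (s / (s ^ 2 + u ^ 2)) : ℝ) : ℂ) := by
  have hp := pi_pos
  rw [Real.fourier_eq']
  have hint : Integrable (fun x : ℝ => Complex.exp (((-2 * π * inner ℝ x u : ℝ) : ℂ) * Complex.I) •
      Complex.exp (-(2 * π * s * |x| : ℝ))) := by
    refine (aux_exp_integrable hs).norm.mono' (Continuous.aestronglyMeasurable (by fun_prop)) ?_
    refine Filter.Eventually.of_forall fun x => ?_
    rw [norm_smul, Complex.norm_exp_ofReal_mul_I, one_mul]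
  rw [← intervalIntegral.integral_Iic_add_Ioi (b := 0) hint.integrableOn hint.integrableOn]
  have e1 : ∫ x in Set.Iic (0:ℝ), Complex.exp (((-2 * π * inner ℝ x u : ℝ) : ℂ) * Complex.I) •
      Complex.exp (-(2 * π * s * |x| : ℝ)) = ∫ x in Set.Iic (0:ℝ),
        Complex.exp (((2 * π * s : ℝ) - (2 * π * u : ℝ) * Complex.I) * x) := by
    refine setIntegral_congr_fun measurableSet_Iic fun x hx => ?_
    simp only [smul_eq_mul, ← Complex.exp_add]
    rw [abs_of_nonpos hx]
    congr 1
    simp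
    ring
  have e2 : ∫ x in Set.Ioi (0:ℝ), Complex.exp (((-2 * π * inner ℝ x u : ℝ) : ℂ) * Complex.I) •
      Complex.exp (-(2 * π * s * |x| : ℝ)) = ∫ x in Set.Ioi (0:ℝ),
        Complex.exp ((-(2 * π * s : ℝ) - (2 * π * u : ℝ) * Complex.I) * x) := by
    refine setIntegral_congr_fun measurableSet_Ioi fun x hx => ?_
    simp only [smul_eq_mul, ← Complex.exp_add]
    rw [abs_of_pos hx]
    congr 1
    simp
    ring
  rw [e1, e2, integral_exp_mul_complex_Iic (by simp; positivity),
    integral_exp_mul_complex_Ioi (by simp; positivity)]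
  have n1 : ((s : ℂ) - u * Complex.I) ≠ 0 := fun h => hs.ne' (by simpa using congrArg Complex.re h)
  have n2 : ((s : ℂ) + u * Complex.I) ≠ 0 := fun h => hs.ne' (by simpa using congrArg Complex.re h)
  have n3 : (s : ℂ) ^ 2 + u ^ 2 = (s - u * Complex.I) * (s + u * Complex.I) := by
    linear_combination ((u:ℂ)^2) * Complex.I_sq
  have hpc : (π : ℂ) ≠ 0 := by exact_mod_cast hp.ne'
  push_cast
  rw [n3]
  have f1 : (2 * π * s - 2 * π * u * Complex.I : ℂ) = 2 * π * (s - u * Complex.I) := by ring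
  have f2 : (-(2 * π * s) - 2 * π * u * Complex.I : ℂ) = -(2 * π * (s + u * Complex.I)) := by ring
  rw [f1, f2]
  simp only [mul_zero, Complex.exp_zero]
  field_simp
  ring

open FourierTransform in
lemma aux_poisson {s : ℝ} (hs : 0 < s) (r : ℝ) :
    ∫ u : ℝ, ((s / (s ^ 2 + u ^ 2) : ℝ) : ℂ) * Complex.exp (-2 * π * Complex.I * r * u)
      = ((π * Real.exp (-(2 * π * |r|) * s) : ℝ) : ℂ) := by
  have hp := pi_pos
  have hF : 𝓕 (fun x : ℝ => Complex.exp (-(2 * π * s * |x| : ℝ)))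
      = fun u => ((1 / π * (s / (s ^ 2 + u ^ 2)) : ℝ) : ℂ) := funext (aux_fourier_exp hs)
  have hinv := Continuous.fourierInv_fourier_eq
    (f := fun x : ℝ => Complex.exp (-(2 * π * s * |x| : ℝ))) (by fun_prop)
    (aux_exp_integrable hs) (by rw [hF]; exact ((aux_kernel_integrable hs).const_mul _).ofReal)
  rw [hF] at hinv
  have h := congrFun hinv (-r)
  rw [Real.fourierInv_eq'] at h
  have hpc : (π : ℂ) ≠ 0 := by exact_mod_cast hp.ne'
  calc _ = ∫ u : ℝ, (π : ℂ) * (Complex.exp (((2 * π * inner ℝ u (-r) : ℝ) : ℂ) * Complex.I) •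
            ((1 / π * (s / (s ^ 2 + u ^ 2)) : ℝ) : ℂ)) := by
        congr 1
        ext u
        have : Complex.exp (((2 * π * inner ℝ u (-r) : ℝ) : ℂ) * Complex.I)
          = Complex.exp (-2 * π * Complex.I * r * u) := by
          congr 1
          simp
          ring
        rw [this, smul_eq_mul]
        push_cast
        field_simp
    _ = _ := by
        rw [integral_const_mul, h, abs_neg]
        push_cast
        congr 2
        ring

/-- The density `5 e^{-4t} - 2 e^{-2t}`. -/
noncomputable def auxRho (t : ℝ) : ℝ := 5 * Real.exp (-t) ^ 4 - 2 * Real.exp (-t) ^ 2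

lemma auxRho_continuous : Continuous auxRho := by
  unfold auxRho
  fun_prop

lemma auxRho_eq (t : ℝ) : auxRho t = 5 * Real.exp (-4 * t) - 2 * Real.exp (-2 * t) := by
  unfold auxRho
  rw [← Real.exp_nat_mul, ← Real.exp_nat_mul]
  push_cast
  ring_nf

lemma auxRho_integrable : IntegrableOn auxRho (Set.Ioi 0) := by
  have h : auxRho = fun t => 5 * Real.exp (-4 * t) - 2 * Real.exp (-2 * t) := funext auxRho_eq
  rw [h]
  exact ((exp_neg_integrableOn_Ioi 0 (by norm_num)).const_mul 5).sub
    ((exp_neg_integrableOn_Ioi 0 (by norm_num)).const_mul 2)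

lemma auxRho_integral : ∫ t in Set.Ioi (0 : ℝ), auxRho t = 1 / 4 := by
  simp_rw [auxRho_eq]
  rw [integral_sub ((exp_neg_integrableOn_Ioi 0 (by norm_num)).const_mul 5)
    ((exp_neg_integrableOn_Ioi 0 (by norm_num)).const_mul 2), integral_const_mul,
    integral_const_mul, integral_exp_mul_Ioi (by norm_num), integral_exp_mul_Ioi (by norm_num)]
  norm_num

lemma aux_cosh_tendsto : Filter.Tendsto Real.cosh Filter.atTop Filter.atTop := by
  refine Filter.tendsto_atTop_mono (f := fun t => Real.exp t / 2) (fun t => ?_)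
    (Real.tendsto_exp_atTop.atTop_div_const (by norm_num))
  rw [Real.cosh_eq]
  have := Real.exp_pos (-t)
  linarith

lemma aux_sinh_tendsto : Filter.Tendsto Real.sinh Filter.atTop Filter.atTop := by
  refine Filter.tendsto_atTop_mono' _ (f₁ := fun t => t) ?_ Filter.tendsto_id
  filter_upwards [Filter.eventually_ge_atTop 0] with t ht
  exact Real.self_le_sinh_iff.2 ht

lemma aux_expneg_tendsto : Filter.Tendsto (fun t : ℝ => Real.exp (-t)) Filter.atTop (nhds 0) :=
  Real.tendsto_exp_neg_atTop_nhds_zero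

lemma aux_kernel_bound (s u : ℝ) (hs : 1 ≤ s) : |s / (s ^ 2 + u ^ 2)| ≤ 1 := by
  rw [abs_of_nonneg (by positivity), div_le_one (by positivity)]
  nlinarith [sq_nonneg u]

lemma aux_hfun_integrand_integrable (u : ℝ) :
    IntegrableOn (fun t => auxRho t * (Real.cosh t / (Real.cosh t ^ 2 + u ^ 2))) (Set.Ioi 0) := by
  refine (Integrable.norm auxRho_integrable).mono' ?_ ?_
  · refine Continuous.aestronglyMeasurable (auxRho_continuous.mul
      (Real.continuous_cosh.div (by fun_prop) fun t => ?_))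
    have := Real.cosh_pos t
    positivity
  · refine Filter.Eventually.of_forall fun t => ?_
    rw [norm_mul]
    exact mul_le_of_le_one_right (norm_nonneg _) (aux_kernel_bound _ _ (Real.one_le_cosh t))

lemma aux_hfun_deriv (u t : ℝ) : HasDerivAt (fun t => -(10 / 3) * Real.exp (-t) ^ 3
    + (14 + 40 * u ^ 2) * Real.exp (-t)
    + (7 + 44 * u ^ 2 + 40 * u ^ 4) / Real.sqrt (1 + u ^ 2)
      * Real.arctan (Real.sinh t / Real.sqrt (1 + u ^ 2))
    + u * (24 + 40 * u ^ 2) * Real.arctan (u / Real.cosh t))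
    (auxRho t * (Real.cosh t / (Real.cosh t ^ 2 + u ^ 2))) t := by
  have hc := Real.cosh_pos t
  have hE : HasDerivAt (fun t : ℝ => Real.exp (-t)) (Real.exp (-t) * (-1)) t :=
    (hasDerivAt_neg t).exp
  have h := ((((hE.pow 3).const_mul (-(10 / 3))).add (hE.const_mul (14 + 40 * u ^ 2))).add
    (((Real.hasDerivAt_sinh t).div_const (Real.sqrt (1 + u ^ 2))).arctan.const_mul
      ((7 + 44 * u ^ 2 + 40 * u ^ 4) / Real.sqrt (1 + u ^ 2)))).add
    ((((hasDerivAt_const t u).div (Real.hasDerivAt_cosh t) hc.ne').arctan).const_mul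
      (u * (24 + 40 * u ^ 2)))
  refine h.congr_deriv ?_
  have hq : 0 < Real.sqrt (1 + u ^ 2) := Real.sqrt_pos.2 (by positivity)
  have hq2 : Real.sqrt (1 + u ^ 2) ^ 2 = 1 + u ^ 2 := Real.sq_sqrt (by positivity)
  have hcs := Real.cosh_sq t
  have e1 : (7 + 44 * u ^ 2 + 40 * u ^ 4) / Real.sqrt (1 + u ^ 2) *
      (1 / (1 + (Real.sinh t / Real.sqrt (1 + u ^ 2)) ^ 2)
        * (Real.cosh t / Real.sqrt (1 + u ^ 2)))
      = (7 + 44 * u ^ 2 + 40 * u ^ 4) * Real.cosh t / (Real.cosh t ^ 2 + u ^ 2) := by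
    have : Real.cosh t ^ 2 + u ^ 2 = Real.sqrt (1 + u ^ 2) ^ 2 + Real.sinh t ^ 2 := by
      rw [hq2, hcs]; ring
    rw [this]
    field_simp
  have e2 : 1 / (1 + (u / Real.cosh t) ^ 2) * ((0 * Real.cosh t - u * Real.sinh t)
      / Real.cosh t ^ 2) = -(u * Real.sinh t) / (Real.cosh t ^ 2 + u ^ 2) := by
    field_simp
    ring
  simp only [Pi.div_apply, Nat.reduceSub, Nat.cast_ofNat]
  rw [e1, e2]
  have hD : Real.cosh t ^ 2 + u ^ 2 ≠ 0 := by positivity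
  have hy := Real.exp_pos (-t)
  have hs : Real.sinh t = Real.cosh t - Real.exp (-t) := by
    rw [Real.cosh_eq, Real.sinh_eq]; ring
  have hyc : 2 * Real.cosh t * Real.exp (-t) = 1 + Real.exp (-t) ^ 2 := by
    rw [Real.cosh_eq]
    have : Real.exp t * Real.exp (-t) = 1 := by rw [← Real.exp_add]; simp
    linear_combination this
  have hcy : Real.cosh t = (1 + Real.exp (-t) ^ 2) / (2 * Real.exp (-t)) := by
    field_simp; linear_combination hyc
  unfold auxRho
  rw [hs]
  generalize Real.exp (-t) = y at *
  generalize Real.cosh t = c at *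
  field_simp
  rw [hcy]
  field_simp
  ring

lemma aux_hfun_repr (u : ℝ) : hfun u = 2 / (3 * π) *
    ∫ t in Set.Ioi (0 : ℝ), auxRho t * (Real.cosh t / (Real.cosh t ^ 2 + u ^ 2)) := by
  have hq : 0 < Real.sqrt (1 + u ^ 2) := Real.sqrt_pos.2 (by positivity)
  have hlim : Filter.Tendsto (fun t => -(10 / 3) * Real.exp (-t) ^ 3
    + (14 + 40 * u ^ 2) * Real.exp (-t)
    + (7 + 44 * u ^ 2 + 40 * u ^ 4) / Real.sqrt (1 + u ^ 2)
      * Real.arctan (Real.sinh t / Real.sqrt (1 + u ^ 2))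
    + u * (24 + 40 * u ^ 2) * Real.arctan (u / Real.cosh t)) Filter.atTop
    (nhds (-(10 / 3) * 0 ^ 3 + (14 + 40 * u ^ 2) * 0
    + (7 + 44 * u ^ 2 + 40 * u ^ 4) / Real.sqrt (1 + u ^ 2) * (π / 2)
    + u * (24 + 40 * u ^ 2) * Real.arctan 0)) := by
    refine Filter.Tendsto.add (Filter.Tendsto.add (Filter.Tendsto.add ?_ ?_) ?_) ?_
    · exact (aux_expneg_tendsto.pow 3).const_mul _
    · exact aux_expneg_tendsto.const_mul _
    · exact ((tendsto_nhds_of_tendsto_nhdsWithin Real.tendsto_arctan_atTop).comp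
        (aux_sinh_tendsto.atTop_div_const hq)).const_mul _
    · exact ((Real.continuous_arctan.tendsto 0).comp
        (aux_cosh_tendsto.const_div_atTop u)).const_mul _
  rw [integral_Ioi_of_hasDerivAt_of_tendsto' (fun t _ => aux_hfun_deriv u t)
    (aux_hfun_integrand_integrable u) hlim]
  have hp := pi_pos
  unfold hfun
  simp only [neg_zero, Real.exp_zero, Real.sinh_zero, Real.cosh_zero, zero_div, Real.arctan_zero,
    div_one]
  field_simp
  ring

lemma aux_kernel_integral {s : ℝ} (hs : 0 < s) : ∫ u : ℝ, s / (s ^ 2 + u ^ 2) = π := by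
  have h := aux_poisson hs 0
  simp only [Complex.ofReal_zero, mul_zero, zero_mul, Complex.exp_zero, mul_one, abs_zero,
    neg_zero, Real.exp_zero] at h
  rw [integral_complex_ofReal] at h
  exact_mod_cast h

lemma aux_prod_integrable : Integrable (fun p : ℝ × ℝ =>
    auxRho p.1 * (Real.cosh p.1 / (Real.cosh p.1 ^ 2 + p.2 ^ 2)))
    ((volume.restrict (Set.Ioi (0 : ℝ))).prod volume) := by
  rw [integrable_prod_iff]
  · refine ⟨Filter.Eventually.of_forall fun t => by
      simpa only using (aux_kernel_integrable (Real.cosh_pos t)).const_mul (auxRho t), ?_⟩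
    have : (fun t : ℝ => ∫ u : ℝ, ‖auxRho t * (Real.cosh t / (Real.cosh t ^ 2 + u ^ 2))‖)
        = fun t => ‖auxRho t‖ * π := by
      ext t
      rw [← aux_kernel_integral (Real.cosh_pos t), ← integral_const_mul]
      congr 1
      ext u
      have := Real.cosh_pos t
      rw [norm_mul, Real.norm_of_nonneg (r := Real.cosh t / _) (by positivity)]
    simp only
    rw [this]
    exact (Integrable.norm auxRho_integrable).mul_const π
  · refine Continuous.aestronglyMeasurable ((auxRho_continuous.comp continuous_fst).mul
      (Continuous.div (by fun_prop) (by fun_prop) fun p => ?_))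
    have := Real.cosh_pos p.1
    positivity

lemma aux_hfun_integrable : Integrable hfun := by
  have h := (aux_prod_integrable.integral_prod_right).const_mul (2 / (3 * π))
  exact h.congr (Filter.Eventually.of_forall fun u => (aux_hfun_repr u).symm)

lemma aux_hfun_fourier (r : ℝ) :
    (∫ u : ℝ, (hfun u : ℂ) * Complex.exp (-2 * π * Complex.I * r * u)) =
      ((2 / 3 * ∫ t in Set.Ioi (0 : ℝ), auxRho t * Real.exp (-(2 * π * |r|) * Real.cosh t) : ℝ)
        : ℂ) := by
  have hp := pi_pos
  have hpc : (π : ℂ) ≠ 0 := by exact_mod_cast hp.ne'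
  have hI : Integrable (Function.uncurry fun (t u : ℝ) =>
      ((auxRho t * (Real.cosh t / (Real.cosh t ^ 2 + u ^ 2)) : ℝ) : ℂ)
        * Complex.exp (-2 * π * Complex.I * r * u))
      ((volume.restrict (Set.Ioi (0 : ℝ))).prod volume) := by
    refine aux_prod_integrable.norm.mono'
      (aux_prod_integrable.ofReal.aestronglyMeasurable.mul
        (Continuous.aestronglyMeasurable (by fun_prop))) ?_
    refine Filter.Eventually.of_forall fun p => ?_
    have e : (-2 * π * Complex.I * r * p.2 : ℂ) = ((-2 * π * r * p.2 : ℝ) : ℂ) * Complex.I := by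
      push_cast; ring
    simp only [Function.uncurry]
    rw [norm_mul, e, Complex.norm_exp_ofReal_mul_I, mul_one, Complex.norm_real]
  have hswap := integral_integral_swap hI
  calc _ = ∫ u : ℝ, ((2 / (3 * π) : ℝ) : ℂ) * ∫ t in Set.Ioi (0 : ℝ),
            ((auxRho t * (Real.cosh t / (Real.cosh t ^ 2 + u ^ 2)) : ℝ) : ℂ)
              * Complex.exp (-2 * π * Complex.I * r * u) := by
        congr 1
        ext u
        rw [integral_mul_const, integral_complex_ofReal, aux_hfun_repr]
        push_cast
        ring
    _ = ((2 / (3 * π) : ℝ) : ℂ) * ∫ t in Set.Ioi (0 : ℝ),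
          ((π * (auxRho t * Real.exp (-(2 * π * |r|) * Real.cosh t)) : ℝ) : ℂ) := by
        rw [integral_const_mul, ← hswap]
        congr 2
        ext t
        have h := aux_poisson (Real.cosh_pos t) r
        simp_rw [Complex.ofReal_mul (auxRho t), mul_assoc (auxRho t : ℂ)]
        rw [integral_const_mul, h]
        push_cast
        ring
    _ = _ := by
        rw [integral_complex_ofReal, integral_const_mul]
        push_cast
        field_simp

lemma aux_bessel1_integrable {x : ℝ} (hx : 0 < x) :
    IntegrableOn (fun t => Real.exp (-x * Real.cosh t) * Real.cosh t) (Set.Ioi 0) := by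
  have h := (exp_neg_integrableOn_Ioi 0 (b := 1) (by norm_num)).const_mul (4 / x ^ 2)
  refine h.mono' (Continuous.aestronglyMeasurable (by fun_prop)) ?_
  refine Filter.Eventually.of_forall fun t => ?_
  have hc := Real.cosh_pos t
  have h3 := quadratic_le_exp_of_nonneg (x := x * Real.cosh t) (by positivity)
  have h4 : 0 < x * Real.cosh t := by positivity
  have h5 : Real.exp t ≤ 2 * Real.cosh t := by
    rw [Real.cosh_eq]
    have := Real.exp_pos (-t)
    linarith
  rw [Real.norm_of_nonneg (by positivity), neg_mul, Real.exp_neg, neg_mul, one_mul, Real.exp_neg,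
    inv_mul_eq_div, ← div_eq_mul_inv, div_div, div_le_div_iff₀ (by positivity) (by positivity)]
  calc Real.cosh t * (x ^ 2 * Real.exp t) ≤ Real.cosh t * (x ^ 2 * (2 * Real.cosh t)) := by gcongr
    _ = 4 * ((x * Real.cosh t) ^ 2 / 2) := by ring
    _ ≤ 4 * Real.exp (x * Real.cosh t) := by linarith

lemma aux_bessel0_integrable {x : ℝ} (hx : 0 < x) :
    IntegrableOn (fun t => Real.exp (-x * Real.cosh t)) (Set.Ioi 0) := by
  refine (aux_bessel1_integrable hx).mono' (Continuous.aestronglyMeasurable (by fun_prop)) ?_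
  refine Filter.Eventually.of_forall fun t => ?_
  rw [Real.norm_of_nonneg (by positivity)]
  exact le_mul_of_one_le_right (by positivity) (Real.one_le_cosh t)

lemma aux_rhoexp_integrable {x : ℝ} (hx : 0 < x) :
    IntegrableOn (fun t => auxRho t * Real.exp (-x * Real.cosh t)) (Set.Ioi 0) := by
  refine (Integrable.norm auxRho_integrable).mono'
    (Continuous.aestronglyMeasurable (auxRho_continuous.mul (by fun_prop))) ?_
  refine Filter.Eventually.of_forall fun t => ?_
  rw [norm_mul, Real.norm_of_nonneg (r := Real.exp _) (by positivity)]
  refine mul_le_of_le_one_right (norm_nonneg _) ?_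
  rw [Real.exp_le_one_iff]
  have := Real.cosh_pos t
  nlinarith

lemma aux_powexp_tendsto {x : ℝ} (hx : 0 < x) (k : ℕ) :
    Filter.Tendsto (fun t => Real.cosh t ^ k * Real.exp (-x * Real.cosh t)) Filter.atTop
      (nhds 0) := by
  have h := ((Real.tendsto_pow_mul_exp_neg_atTop_nhds_zero k).comp
    (aux_cosh_tendsto.const_mul_atTop hx)).const_mul ((x ^ k)⁻¹)
  rw [mul_zero] at h
  refine h.congr fun t => ?_
  simp only [Function.comp, mul_pow, neg_mul]
  field_simp

/-- Antiderivative used in the reduction to `K₀` and `K₁`. -/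
noncomputable def auxPhi (x t : ℝ) : ℝ :=
  Real.exp (-x * Real.cosh t) *
    (Real.sinh t * (-(40 / x) * Real.cosh t ^ 2 - 120 / x ^ 2 * Real.cosh t
      + (4 / x - 240 / x ^ 3))
    + (40 / x * Real.cosh t ^ 3 + 120 / x ^ 2 * Real.cosh t ^ 2
      + (240 / x ^ 3 - 24 / x) * Real.cosh t + (240 / x ^ 4 - 24 / x ^ 2)))

lemma auxPhi_tendsto {x : ℝ} (hx : 0 < x) :
    Filter.Tendsto (auxPhi x) Filter.atTop (nhds 0) := by
  have P := aux_powexp_tendsto hx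
  have Q : ∀ k, Filter.Tendsto (fun t => Real.sinh t * (Real.cosh t ^ k
      * Real.exp (-x * Real.cosh t))) Filter.atTop (nhds 0) := by
    intro k
    have := (P (k + 1)).sub (aux_expneg_tendsto.mul (P k))
    rw [mul_zero, sub_zero] at this
    refine this.congr fun t => ?_
    have hs : Real.sinh t = Real.cosh t - Real.exp (-t) := by
      rw [Real.cosh_eq, Real.sinh_eq]; ring
    rw [hs]
    ring
  have := ((((((Q 2).const_mul (-(40 / x))).add ((Q 1).const_mul (-(120 / x ^ 2)))).add
    ((Q 0).const_mul (4 / x - 240 / x ^ 3))).add ((P 3).const_mul (40 / x))).add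
    ((P 2).const_mul (120 / x ^ 2))).add (((P 1).const_mul (240 / x ^ 3 - 24 / x)).add
      ((P 0).const_mul (240 / x ^ 4 - 24 / x ^ 2)))
  simp only [mul_zero, add_zero] at this
  refine this.congr fun t => ?_
  unfold auxPhi
  ring

lemma auxPhi_deriv {x : ℝ} (hx : 0 < x) (t : ℝ) : HasDerivAt (auxPhi x)
    (auxRho t * Real.exp (-x * Real.cosh t) - ((3 + 120 / x ^ 2) * Real.exp (-x * Real.cosh t)
      + (36 / x + 240 / x ^ 3) * (Real.exp (-x * Real.cosh t) * Real.cosh t))) t := by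
  have C := Real.hasDerivAt_cosh t
  have S := Real.hasDerivAt_sinh t
  have h := ((C.const_mul (-x)).exp).mul
    ((S.mul ((((C.pow 2).const_mul (-(40 / x))).sub (C.const_mul (120 / x ^ 2))).add_const
      (4 / x - 240 / x ^ 3))).add
    (((((C.pow 3).const_mul (40 / x)).add ((C.pow 2).const_mul (120 / x ^ 2))).add
      (C.const_mul (240 / x ^ 3 - 24 / x))).add_const (240 / x ^ 4 - 24 / x ^ 2)))
  refine HasDerivAt.congr_deriv (f := auxPhi x) h ?_
  have hy := Real.exp_pos (-t)
  have hs : Real.sinh t = Real.cosh t - Real.exp (-t) := by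
    rw [Real.cosh_eq, Real.sinh_eq]; ring
  have hyc : 2 * Real.cosh t * Real.exp (-t) = 1 + Real.exp (-t) ^ 2 := by
    rw [Real.cosh_eq]
    have : Real.exp t * Real.exp (-t) = 1 := by rw [← Real.exp_add]; simp
    linear_combination this
  have hcy : Real.cosh t = (1 + Real.exp (-t) ^ 2) / (2 * Real.exp (-t)) := by
    field_simp; linear_combination hyc
  unfold auxRho
  generalize Real.exp (-x * Real.cosh t) = z
  simp only [Pi.pow_apply, Pi.mul_apply, Pi.sub_apply, Pi.add_apply, Nat.reduceSub,
    Nat.cast_ofNat, pow_one]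
  rw [hs]
  generalize Real.exp (-t) = y at *
  generalize Real.cosh t = c at *
  rw [hcy]
  field_simp
  ring

lemma aux_rho_bessel {x : ℝ} (hx : 0 < x) :
    ∫ t in Set.Ioi (0 : ℝ), auxRho t * Real.exp (-x * Real.cosh t) =
      (3 + 120 / x ^ 2) * K0 x + (36 / x + 240 / x ^ 3) * K1 x
        - Real.exp (-x) * (16 / x + 96 / x ^ 2 + 240 / x ^ 3 + 240 / x ^ 4) := by
  have i0 := (aux_bessel0_integrable hx).const_mul (3 + 120 / x ^ 2)
  have i1 := (aux_bessel1_integrable hx).const_mul (36 / x + 240 / x ^ 3)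
  have ir := aux_rhoexp_integrable hx
  have h := integral_Ioi_of_hasDerivAt_of_tendsto' (a := 0) (fun t _ => auxPhi_deriv hx t)
    (ir.sub (i0.add i1)) (auxPhi_tendsto hx)
  have h0 := integral_sub ir (i0.add i1)
  simp only [Pi.add_apply] at h0
  rw [h0] at h
  have h2 := integral_add i0 i1
  rw [integral_const_mul, integral_const_mul] at h2
  rw [h2] at h
  have h3 : auxPhi x 0 = Real.exp (-x) * (16 / x + 96 / x ^ 2 + 240 / x ^ 3 + 240 / x ^ 4) := by
    unfold auxPhi
    simp only [Real.cosh_zero, Real.sinh_zero, mul_one]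
    field_simp
    ring
  rw [h3] at h
  unfold K0 K1
  linarith

/-- `hfun` is integrable with total integral `1/6`, and its Fourier
transform at `r ≠ 0` is an explicit combination of Bessel functions. -/
theorem hfun_fourier_transform :
    Integrable hfun ∧
    (∫ u : ℝ, hfun u) = 1 / 6 ∧
    (∀ r : ℝ, r ≠ 0 →
      (∫ u : ℝ, (hfun u : ℂ) * Complex.exp (-2 * π * Complex.I * r * u)) =
        ((2 * (10 / (π ^ 2 * r ^ 2) + 1) * K0 (2 * π * |r|) +
          4 * (3 * π ^ 2 * r ^ 2 + 5) / (π ^ 3 * |r| ^ 3) * K1 (2 * π * |r|) -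
          32 / (3 * π * Real.sqrt |r|) * K7half (2 * π * |r|) : ℝ) : ℂ)) := by
  refine ⟨aux_hfun_integrable, ?_, fun r hr => ?_⟩
  · have h := aux_hfun_fourier 0
    simp only [Complex.ofReal_zero, mul_zero, zero_mul, Complex.exp_zero, mul_one, abs_zero,
      neg_zero, Real.exp_zero] at h
    rw [integral_complex_ofReal, auxRho_integral] at h
    have h' : (∫ u : ℝ, hfun u) = 2 / 3 * (1 / 4) := by exact_mod_cast h
    rw [h']
    norm_num
  · rw [aux_hfun_fourier]
    have hp := pi_pos
    have ha : 0 < |r| := abs_pos.2 hr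
    rw [aux_rho_bessel (x := 2 * π * |r|) (by positivity)]
    congr 1
    rw [← sq_abs r]
    generalize |r| = a at *
    unfold K7half
    have hq : 0 < Real.sqrt a := Real.sqrt_pos.2 ha
    have hs : Real.sqrt (π / (2 * (2 * π * a))) = 1 / (2 * Real.sqrt a) := by
      have : π / (2 * (2 * π * a)) = (1 / (2 * Real.sqrt a)) ^ 2 := by
        rw [div_pow, mul_pow, Real.sq_sqrt ha.le]
        field_simp
      rw [this, Real.sqrt_sq (by positivity)]
    have hk : 32 / (3 * π * Real.sqrt a) * (1 / (2 * Real.sqrt a)) = 16 / (3 * π * a) := by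
      have : a = Real.sqrt a ^ 2 := (Real.sq_sqrt ha.le).symm
      nth_rewrite 3 [this]
      field_simp
      norm_num
    rw [hs, mul_assoc (1 / (2 * Real.sqrt a)), ← mul_assoc (32 / (3 * π * Real.sqrt a)), hk]
    field_simp
    ring
end

section
/- Let h : ℝ → ℝ be defined by h(u) = (7 + 44u² + 40u⁴)/(3√(1+u²)) − (16/(3π))·( 4/3 + 5u² + u·(3 + 5u²)·arctan(u) ), and define Φ on the upper half plane by Φ(x+iy) = 4ζ(3)² · ∑_{q ≥ 1} q^{−3} ∑_{p ∈ ℤ, gcd(p,q)=1} h( (x + p/q)/y ), a sum over all rational numbers p/q written in lowest terms with q > 0. Then this sum converges absolutely for every x ∈ ℝ and y > 0, and for every integer n the n-th Fourier coefficient satisfies ∫₀¹ Φ(x+iy)·e^{−2πinx} dx = 4ζ(3)·σ_{−2}(|n|)·y·ĥ(ny), where ĥ(r) = ∫_ℝ h(u)·e^{−2πiru} du is the Fourier transform of h, σ_{−2}(m) = ∑_{d | m, d > 0} d^{−2} for m ≥ 1, and σ_{−2}(0) is interpreted as ζ(2). -/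
open Real MeasureTheory

/-- Riemann zeta function for real arguments `s > 1`, as a sum. -/
noncomputable def zetaR (s : ℝ) : ℝ := ∑' n : ℕ, 1 / ((n : ℝ) + 1) ^ s

/-- Index set of rationals `p/q` in lowest terms with `q ≥ 1`. -/
def RatIdx : Type := {pq : ℤ × ℤ // 0 < pq.2 ∧ Int.gcd pq.1 pq.2 = 1}

/-- The summand `q^{−3}·h((x + p/q)/y)` of `Φ(x+iy)/(4ζ(3)²)`. -/
noncomputable def PhiTerm (x y : ℝ) (pq : RatIdx) : ℝ :=
  ((pq.1.2 : ℝ)) ^ (-3 : ℤ) * hfun ((x + (pq.1.1 : ℝ) / (pq.1.2 : ℝ)) / y)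

/-- The divisor sum `σ₋₂(|n|)`, interpreted as `ζ(2)` when `n = 0`. -/
noncomputable def sigmaNeg2 (n : ℤ) : ℝ :=
  if n = 0 then zetaR 2 else ∑ d ∈ n.natAbs.divisors, ((d : ℝ)) ^ (-2 : ℤ)

/-- The Fourier transform of `hfun`. -/
noncomputable def hhat (r : ℝ) : ℂ :=
  ∫ u : ℝ, (hfun u : ℂ) * Complex.exp (-2 * π * Complex.I * r * u)


lemma arctan_lower {t : ℝ} (ht : 0 ≤ t) : t - t ^ 3 / 3 ≤ Real.arctan t := by
  have hd : ∀ x : ℝ, HasDerivAt (fun x : ℝ => Real.arctan x - (x - x ^ 3 / 3))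
      (1 / (1 + x ^ 2) - (1 - 3 * x ^ 2 / 3)) x := by
    intro x
    have h3 : HasDerivAt (fun x : ℝ => x ^ 3) (3 * x ^ 2) x := by
      simpa using hasDerivAt_pow 3 x
    exact (Real.hasDerivAt_arctan x).sub ((hasDerivAt_id x).sub (h3.div_const 3))
  have hm : Monotone (fun x : ℝ => Real.arctan x - (x - x ^ 3 / 3)) := by
    apply monotone_of_deriv_nonneg (fun x => (hd x).differentiableAt)
    intro x
    rw [(hd x).deriv]
    have : 1 / (1 + x ^ 2) - (1 - 3 * x ^ 2 / 3) = x ^ 4 / (1 + x ^ 2) := by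
      field_simp; ring
    rw [this]; positivity
  have := hm ht
  simp at this
  linarith

lemma arctan_upper {t : ℝ} (ht : 0 ≤ t) : Real.arctan t ≤ t - t ^ 3 / 3 + t ^ 5 / 5 := by
  have hd : ∀ x : ℝ, HasDerivAt (fun x : ℝ => (x - x ^ 3 / 3 + x ^ 5 / 5) - Real.arctan x)
      ((1 - 3 * x ^ 2 / 3 + 5 * x ^ 4 / 5) - 1 / (1 + x ^ 2)) x := by
    intro x
    have h3 : HasDerivAt (fun x : ℝ => x ^ 3) (3 * x ^ 2) x := by
      simpa using hasDerivAt_pow 3 x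
    have h5 : HasDerivAt (fun x : ℝ => x ^ 5) (5 * x ^ 4) x := by
      simpa using hasDerivAt_pow 5 x
    exact (((hasDerivAt_id x).sub (h3.div_const 3)).add (h5.div_const 5)).sub
      (Real.hasDerivAt_arctan x)
  have hm : Monotone (fun x : ℝ => (x - x ^ 3 / 3 + x ^ 5 / 5) - Real.arctan x) := by
    apply monotone_of_deriv_nonneg (fun x => (hd x).differentiableAt)
    intro x
    rw [(hd x).deriv]
    have : (1 - 3 * x ^ 2 / 3 + 5 * x ^ 4 / 5) - 1 / (1 + x ^ 2) = x ^ 6 / (1 + x ^ 2) := by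
      field_simp; ring
    rw [this]; positivity
  have := hm ht
  simp at this
  linarith

lemma E_bound {u : ℝ} (hu : 0 ≤ u) :
    |4 / 3 + 5 * u ^ 2 - u * (3 + 5 * u ^ 2) * (π / 2 - Real.arctan u)| ≤ 32 / (1 + u ^ 2) := by
  have hpi := Real.pi_lt_four
  have hpi0 := Real.pi_pos
  rcases le_total u 1 with h1 | h1
  · have ha : 0 ≤ Real.arctan u := Real.arctan_nonneg.mpr hu
    have hb : Real.arctan u < π / 2 := Real.arctan_lt_pi_div_two u
    have hw0 : 0 ≤ π / 2 - Real.arctan u := by linarith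
    have hw2 : π / 2 - Real.arctan u ≤ 2 := by linarith
    have hu2 : u ^ 2 ≤ 1 := by nlinarith
    have h16 : (16 : ℝ) ≤ 32 / (1 + u ^ 2) := by
      rw [le_div_iff₀ (by positivity)]; nlinarith
    have hc0 : 0 ≤ u * (3 + 5 * u ^ 2) := by positivity
    have hc : u * (3 + 5 * u ^ 2) ≤ 8 := by nlinarith
    have hp0 := mul_nonneg hc0 hw0
    have hp : u * (3 + 5 * u ^ 2) * (π / 2 - Real.arctan u) ≤ 8 * 2 :=
      mul_le_mul hc hw2 hw0 (by norm_num)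
    refine le_trans ?_ h16
    rw [abs_le]; constructor <;> nlinarith
  · have hu0 : 0 < u := by linarith
    have hinv : π / 2 - Real.arctan u = Real.arctan u⁻¹ := (Real.arctan_inv_of_pos hu0).symm
    rw [hinv]
    have hl := arctan_lower (inv_nonneg.mpr hu)
    have hr := arctan_upper (inv_nonneg.mpr hu)
    have hc0 : 0 ≤ u * (3 + 5 * u ^ 2) := by positivity
    have hl' := mul_le_mul_of_nonneg_left hl hc0
    have hr' := mul_le_mul_of_nonneg_left hr hc0
    have e1 : u * (3 + 5 * u ^ 2) * (u⁻¹ - u⁻¹ ^ 3 / 3) = 4 / 3 + 5 * u ^ 2 - 1 / u ^ 2 := by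
      field_simp; ring
    have e2 : u * (3 + 5 * u ^ 2) * (u⁻¹ - u⁻¹ ^ 3 / 3 + u⁻¹ ^ 5 / 5)
        = 4 / 3 + 5 * u ^ 2 + 3 / (5 * u ^ 4) := by
      field_simp; ring
    rw [e1] at hl'
    rw [e2] at hr'
    have hu2 : 1 ≤ u ^ 2 := by nlinarith
    have b1 : 1 / u ^ 2 ≤ 32 / (1 + u ^ 2) := by
      rw [div_le_div_iff₀ (by positivity) (by positivity)]; nlinarith
    have b2 : 3 / (5 * u ^ 4) ≤ 32 / (1 + u ^ 2) := by
      rw [div_le_div_iff₀ (by positivity) (by positivity)]; nlinarith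
    rw [abs_le]; constructor <;> linarith

lemma D_bound {u : ℝ} (hu : 0 ≤ u) :
    |(7 + 44 * u ^ 2 + 40 * u ^ 4) / (3 * Real.sqrt (1 + u ^ 2)) - 8 / 3 * (u * (3 + 5 * u ^ 2))|
      ≤ 3 / (1 + u ^ 2) := by
  set s := Real.sqrt (1 + u ^ 2) with hs
  have hs2 : s ^ 2 = 1 + u ^ 2 := Real.sq_sqrt (by positivity)
  have hs1 : 1 ≤ s := by rw [hs]; apply Real.one_le_sqrt.mpr; nlinarith
  have hs0 : 0 < s := by linarith
  have key : (7 + 44 * u ^ 2 + 40 * u ^ 4) / (3 * s) - 8 / 3 * (u * (3 + 5 * u ^ 2))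
      = (49 + 40 * u ^ 2) / (3 * s * ((7 + 44 * u ^ 2 + 40 * u ^ 4) + 8 * u * (3 + 5 * u ^ 2) * s)) := by
    have h1 : 0 < (7 + 44 * u ^ 2 + 40 * u ^ 4) + 8 * u * (3 + 5 * u ^ 2) * s := by positivity
    rw [eq_div_iff (by positivity)]
    field_simp
    linear_combination (- (8 * u * (3 + 5 * u ^ 2)) ^ 2) * hs2
  rw [key, abs_of_nonneg (by positivity), div_le_div_iff₀ (by positivity) (by positivity)]
  have h2 : 7 * (1 + u ^ 2) ^ 2 ≤ (7 + 44 * u ^ 2 + 40 * u ^ 4) + 8 * u * (3 + 5 * u ^ 2) * s := by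
    have : 0 ≤ 8 * u * (3 + 5 * u ^ 2) * s := by positivity
    nlinarith [sq_nonneg u, sq_nonneg (u ^ 2)]
  have h3 : 1 * (7 * (1 + u ^ 2) ^ 2) ≤
      s * ((7 + 44 * u ^ 2 + 40 * u ^ 4) + 8 * u * (3 + 5 * u ^ 2) * s) :=
    mul_le_mul hs1 h2 (by positivity) hs0.le
  nlinarith [sq_nonneg u, sq_nonneg (u ^ 2)]

lemma hfun_neg (u : ℝ) : hfun (-u) = hfun u := by
  unfold hfun
  rw [Real.arctan_neg]
  ring_nf

lemma hfun_bound (u : ℝ) : |hfun u| ≤ 100 / (1 + u ^ 2) := by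
  wlog hu : 0 ≤ u with H
  · have := H (-u) (by linarith)
    rwa [hfun_neg, neg_sq] at this
  have hD := D_bound hu
  have hE := E_bound hu
  have hpi := Real.pi_gt_three
  have hpi0 := Real.pi_pos
  have e : hfun u = ((7 + 44 * u ^ 2 + 40 * u ^ 4) / (3 * Real.sqrt (1 + u ^ 2))
      - 8 / 3 * (u * (3 + 5 * u ^ 2))) - 16 / (3 * π) *
      (4 / 3 + 5 * u ^ 2 - u * (3 + 5 * u ^ 2) * (π / 2 - Real.arctan u)) := by
    unfold hfun
    have : 16 / (3 * π) * (u * (3 + 5 * u ^ 2) * (π / 2)) = 8 / 3 * (u * (3 + 5 * u ^ 2)) := by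
      field_simp; ring
    linear_combination -this
  rw [e]
  have hc : 16 / (3 * π) ≤ 2 := by
    rw [div_le_iff₀ (by positivity)]; linarith
  have hc0 : 0 ≤ 16 / (3 * π) := by positivity
  refine (abs_sub _ _).trans ?_
  rw [abs_mul, abs_of_nonneg hc0]
  have := mul_le_mul hc hE (abs_nonneg _) (by norm_num)
  calc _ ≤ 3 / (1 + u ^ 2) + 2 * (32 / (1 + u ^ 2)) := by linarith
    _ = 67 / (1 + u ^ 2) := by ring
    _ ≤ _ := by gcongr; norm_num

lemma hfun_cont : Continuous hfun := by
  unfold hfun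
  have : ∀ u : ℝ, 3 * Real.sqrt (1 + u ^ 2) ≠ 0 := fun u => by positivity
  have h2 := Real.continuous_arctan
  fun_prop (disch := assumption)

/-- term of the full (non-coprime) sum -/
noncomputable def fullTerm (x y : ℝ) (a : ℕ+ × ℤ) : ℝ :=
  ((a.1 : ℝ) ^ 3)⁻¹ * hfun ((x + (a.2 : ℝ) / (a.1 : ℝ)) / y)

noncomputable def cInt (m : ℤ) : ℝ := (1 + (m : ℝ) ^ 2)⁻¹

lemma cInt_nonneg (m : ℤ) : 0 ≤ cInt m := by unfold cInt; positivity

lemma cInt_summable : Summable cInt := by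
  have h := (Real.summable_one_div_int_pow (p := 2)).mpr (by norm_num)
  refine Summable.of_norm_bounded_eventually h ?_
  have : ∀ᶠ m : ℤ in Filter.cofinite, m ≠ 0 := by
    rw [Filter.eventually_cofinite]
    simp
  filter_upwards [this] with m hm
  rw [Real.norm_of_nonneg (cInt_nonneg m), cInt, ← one_div]
  have : (m : ℝ) ≠ 0 := by exact_mod_cast hm
  have : 0 < (m : ℝ) ^ 2 := by positivity
  gcongr
  linarith

lemma cInt_hasSum_div (q : ℕ+) :
    HasSum (fun p : ℤ => cInt (p / (q : ℤ))) ((∑' m, cInt m) * q) := by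
  have : NeZero (q : ℕ) := ⟨q.ne_zero⟩
  have h1 : HasSum (fun _ : Fin q => (1 : ℝ)) (q : ℝ) := by
    have := hasSum_fintype (fun _ : Fin q => (1 : ℝ))
    simpa using this
  have h2 : Summable (fun x : ℤ × Fin q => cInt x.1 * (1 : ℝ)) :=
    cInt_summable.mul_of_nonneg h1.summable cInt_nonneg (fun _ => zero_le_one)
  have h3 := cInt_summable.hasSum.mul h1 h2
  rw [← (Int.divModEquiv (q : ℕ)).hasSum_iff] at h3
  convert! h3 using 2 with p
  simp [Int.divModEquiv]

noncomputable def bnd (a : ℕ+ × ℤ) : ℝ := ((a.1 : ℝ) ^ 3)⁻¹ * cInt (a.2 / (a.1 : ℤ))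

lemma pnat_summable {k : ℕ} (hk : 1 < k) : Summable (fun q : ℕ+ => ((q : ℝ) ^ k)⁻¹) := by
  have := (Real.summable_nat_pow_inv (p := k)).mpr hk
  exact this.comp_injective PNat.coe_injective

lemma bnd_summable : Summable bnd := by
  rw [summable_prod_of_nonneg]
  · constructor
    · intro q
      have := (cInt_hasSum_div q).summable.mul_left (((q : ℝ) ^ 3)⁻¹)
      exact this
    · have : (fun q : ℕ+ => ∑' p : ℤ, bnd (q, p)) =
          fun q : ℕ+ => (∑' m, cInt m) * ((q : ℝ) ^ 2)⁻¹ := by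
        funext q
        have := ((cInt_hasSum_div q).mul_left (((q : ℝ) ^ 3)⁻¹)).tsum_eq
        unfold bnd
        rw [this]
        have : (q : ℝ) ≠ 0 := by positivity
        field_simp
      rw [this]
      exact (pnat_summable (by norm_num)).mul_left _
  · intro a
    have := cInt_nonneg (a.2 / (a.1 : ℤ))
    simp only [bnd, Pi.zero_apply]
    positivity

noncomputable def KK (X y : ℝ) : ℝ := 100 * (1 + 2 * (X + 1) ^ 2 + 2 * y ^ 2)

lemma fullTerm_bound {X x y : ℝ} (hx : |x| ≤ X) (hy : 0 < y) (a : ℕ+ × ℤ) :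
    |fullTerm x y a| ≤ KK X y * bnd a := by
  obtain ⟨q, p⟩ := a
  have hq : (0 : ℝ) < q := by positivity
  have hqz : (0 : ℤ) < (q : ℤ) := by positivity
  set m : ℤ := p / (q : ℤ) with hm
  set r : ℤ := p % (q : ℤ) with hr
  have hpr : p = (q : ℤ) * m + r := (Int.mul_ediv_add_emod p q).symm
  have hr0 : 0 ≤ r := Int.emod_nonneg _ hqz.ne'
  have hr1 : r < q := Int.emod_lt_of_pos _ hqz
  have hr0' : (0 : ℝ) ≤ r := by exact_mod_cast hr0
  have hr1' : (r : ℝ) ≤ q := by exact_mod_cast hr1.le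
  have e : (p : ℝ) / q = m + (r : ℝ) / q := by
    rw [hpr]; push_cast; field_simp
  have f0 : 0 ≤ (r : ℝ) / q := by positivity
  have f1 : (r : ℝ) / q ≤ 1 := by rw [div_le_one hq]; exact hr1'
  set t : ℝ := x + (r : ℝ) / q with ht
  have hxt : x + (p : ℝ) / q = m + t := by rw [e, ht]; ring
  have htX : t ^ 2 ≤ (X + 1) ^ 2 := by
    have := abs_le.mp hx
    apply sq_le_sq'
    · linarith
    · linarith
  have hb := hfun_bound ((m + t) / y)
  have hb2 : 100 / (1 + ((m + t) / y) ^ 2) ≤ KK X y * cInt m := by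
    unfold KK cInt
    rw [← div_eq_mul_inv, div_le_div_iff₀ (by positivity) (by positivity)]
    set w := ((m : ℝ) + t) / y with hw
    have hmw : (m : ℝ) = w * y - t := by rw [hw]; field_simp; ring
    rw [hmw]
    have : (w * y - t) ^ 2 ≤ 2 * (w ^ 2 * y ^ 2) + 2 * t ^ 2 := by nlinarith [sq_nonneg (w * y + t)]
    have h1 : 0 ≤ w ^ 2 * (1 + 2 * (X + 1) ^ 2) := by positivity
    have h2 : 0 ≤ y ^ 2 := by positivity
    nlinarith
  unfold fullTerm bnd
  simp only
  rw [hxt, abs_mul, abs_of_pos (by positivity : (0 : ℝ) < ((q : ℝ) ^ 3)⁻¹), ← hm]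
  calc _ ≤ ((q : ℝ) ^ 3)⁻¹ * (KK X y * cInt m) := by gcongr; exact hb.trans hb2
    _ = _ := by ring

lemma fullTerm_summable (x : ℝ) {y : ℝ} (hy : 0 < y) : Summable (fun a => |fullTerm x y a|) :=
  Summable.of_nonneg_of_le (fun _ => abs_nonneg _) (fun a => fullTerm_bound le_rfl hy a)
    (bnd_summable.mul_left _)

/-- multiply a reduced fraction by a common factor -/
def expand (a : ℕ+ × RatIdx) : ℕ+ × ℤ :=
  (a.1 * ⟨a.2.1.2.toNat, by have := a.2.2.1; omega⟩, a.1 * a.2.1.1)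

lemma expand_fst (a : ℕ+ × RatIdx) : ((expand a).1 : ℤ) = a.1 * a.2.1.2 := by
  have h : 0 < a.2.1.2 := a.2.2.1
  change (((a.1 : ℕ) * a.2.1.2.toNat : ℕ) : ℤ) = _
  rw [Nat.cast_mul, Int.toNat_of_nonneg h.le]

lemma expand_bij : Function.Bijective expand := by
  constructor
  · rintro ⟨d, ⟨⟨p, q⟩, hq, hg⟩⟩ ⟨d', ⟨⟨p', q'⟩, hq', hg'⟩⟩ h
    have h1 := congrArg (fun z => ((z.1 : ℕ+) : ℤ)) h
    have h2 := congrArg Prod.snd h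
    simp only [expand_fst] at h1
    simp only [expand] at h2
    simp only at hq hg hq' hg'
    have hd : d = d' := by
      have e1 : Int.gcd (d * p) (d * q) = d := by
        rw [Int.gcd_mul_left, hg]; simp
      have e2 : Int.gcd (d' * p') (d' * q') = d' := by
        rw [Int.gcd_mul_left, hg']; simp
      rw [h1, h2, e2] at e1
      exact (PNat.coe_injective e1).symm
    subst hd
    have hd0 : (d : ℤ) ≠ 0 := by positivity
    have hp := mul_left_cancel₀ hd0 h2
    have hqq := mul_left_cancel₀ hd0 h1
    subst hp; subst hqq
    rfl
  · rintro ⟨Q, P⟩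
    have hQ : (0 : ℤ) < Q := by positivity
    have hg : 0 < Int.gcd P Q := Int.gcd_pos_of_ne_zero_right _ hQ.ne'
    obtain ⟨p, hp⟩ := Int.gcd_dvd_left P (Q : ℤ)
    obtain ⟨q, hq⟩ := Int.gcd_dvd_right P (Q : ℤ)
    have hgz : (0 : ℤ) < Int.gcd P Q := by exact_mod_cast hg
    have hq0 : 0 < q := by
      by_contra hcon
      nlinarith
    have hgcd : Int.gcd p q = 1 := by
      have e := Int.gcd_mul_left (Int.gcd P Q : ℤ) p q
      rw [← hp, ← hq] at e
      rw [Int.natAbs_natCast] at e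
      exact Nat.eq_of_mul_eq_mul_left hg (by rw [← e, mul_one])
    let A : ℕ+ × RatIdx := (⟨Int.gcd P Q, hg⟩, ⟨(p, q), hq0, hgcd⟩)
    refine ⟨A, ?_⟩
    have hfst : ((expand A).1 : ℤ) = Q := by
      rw [expand_fst]; exact hq.symm
    apply Prod.ext
    · apply PNat.coe_injective
      exact_mod_cast hfst
    · exact hp.symm

lemma fullTerm_expand (x y : ℝ) (a : ℕ+ × RatIdx) :
    fullTerm x y (expand a) = ((a.1 : ℝ) ^ 3)⁻¹ * PhiTerm x y a.2 := by
  have h1 : (((expand a).1 : ℕ+) : ℝ) = (a.1 : ℝ) * (a.2.1.2 : ℝ) := by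
    have := expand_fst a
    exact_mod_cast this
  have h2 : (((expand a).2 : ℤ) : ℝ) = (a.1 : ℝ) * (a.2.1.1 : ℝ) := by
    simp [expand]
  have hq : (0 : ℝ) < (a.2.1.2 : ℝ) := by exact_mod_cast a.2.2.1
  have hd : (0 : ℝ) < (a.1 : ℝ) := by positivity
  unfold fullTerm PhiTerm
  rw [h1, h2, mul_div_mul_left _ _ hd.ne']
  have : ((a.2.1.2 : ℝ)) ^ (-3 : ℤ) = ((a.2.1.2 : ℝ) ^ 3)⁻¹ := by
    rw [zpow_neg]; norm_cast
  rw [this, mul_pow, mul_inv]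
  ring

lemma phi_summable (x : ℝ) {y : ℝ} (hy : 0 < y) :
    Summable (fun pq : RatIdx => |PhiTerm x y pq|) := by
  have h := (fullTerm_summable x hy).comp_injective
    (expand_bij.injective.comp (Prod.mk_right_injective (1 : ℕ+)))
  refine h.congr ?_
  intro pq
  simp [fullTerm_expand]

lemma zetaR_nat (k : ℕ) : zetaR k = ∑' q : ℕ+, ((q : ℝ) ^ k)⁻¹ := by
  unfold zetaR
  rw [← Equiv.pnatEquivNat.symm.tsum_eq]
  apply tsum_congr
  intro n
  rw [Real.rpow_natCast]
  simp [Equiv.pnatEquivNat]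

lemma zeta_mul_phi (x : ℝ) {y : ℝ} (hy : 0 < y) :
    zetaR 3 * ∑' pq : RatIdx, PhiTerm x y pq = ∑' a, fullTerm x y a := by
  have hz : zetaR 3 = ∑' q : ℕ+, ((q : ℝ) ^ 3)⁻¹ := by
    have := zetaR_nat 3
    exact_mod_cast this
  have hs1 : Summable (fun q : ℕ+ => ((q : ℝ) ^ 3)⁻¹) := pnat_summable (by norm_num)
  have hs2 := (phi_summable x hy).of_abs
  have hb : Summable (fun a : ℕ+ × RatIdx => ((a.1 : ℝ) ^ 3)⁻¹ * PhiTerm x y a.2) := by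
    have := (fullTerm_summable x hy).of_abs.comp_injective expand_bij.injective
    exact this.congr (fun a => fullTerm_expand x y a)
  rw [hz, hs1.tsum_mul_tsum hs2 hb,
    ← (Equiv.ofBijective expand expand_bij).tsum_eq (fullTerm x y)]
  exact tsum_congr (fun a => (fullTerm_expand x y a).symm)

lemma kernel_integrable (w : ℝ) :
    Integrable (fun u : ℝ => (hfun u : ℂ) * Complex.exp (-2 * π * Complex.I * w * u)) := by
  have hcont : Continuous (fun u : ℝ => (hfun u : ℂ) * Complex.exp (-2 * π * Complex.I * w * u)) := by
    have := hfun_cont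
    fun_prop
  refine Integrable.mono' (integrable_inv_one_add_sq.const_mul 100) hcont.aestronglyMeasurable ?_
  filter_upwards with u
  rw [norm_mul, Complex.norm_real]
  have : ‖Complex.exp (-2 * π * Complex.I * w * u)‖ = 1 := by
    have e : (-2 * π * Complex.I * w * u : ℂ) = ((-2 * π * w * u : ℝ) : ℂ) * Complex.I := by
      push_cast; ring
    rw [e, Complex.norm_exp_ofReal_mul_I]
  rw [this, mul_one, ← div_eq_mul_inv]
  exact hfun_bound u

noncomputable def GG (n : ℤ) (y : ℝ) (a : ℕ+ × ℤ) : ℂ :=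
  ∫ x in (0:ℝ)..1, (fullTerm x y a : ℂ) * Complex.exp (-2 * π * Complex.I * n * x)

lemma GG_hasSum_int (n : ℤ) {y : ℝ} (hy : 0 < y) (q : ℕ+) (r : ℕ) :
    HasSum (fun m : ℤ => GG n y (q, m * (q : ℕ) + r))
      (((q : ℂ) ^ 3)⁻¹ * Complex.exp (2 * π * Complex.I * n / q) ^ r *
        (y * hhat ((n : ℝ) * y))) := by
  have hq : (q : ℝ) ≠ 0 := by positivity
  have hqC : (q : ℂ) ≠ 0 := by exact_mod_cast hq
  have hyC : (y : ℂ) ≠ 0 := by exact_mod_cast hy.ne'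
  let C : ℂ := ((q : ℂ) ^ 3)⁻¹ * Complex.exp (2 * π * Complex.I * n / q) ^ r
  let k : ℝ → ℂ := fun u => C * ((hfun u : ℂ) *
    Complex.exp (-2 * π * Complex.I * (((n : ℝ) * y : ℝ) : ℂ) * u))
  have hk : Integrable k := (kernel_integrable _).const_mul C
  have hF : Integrable (fun x : ℝ => k ((x + (r : ℝ) / q) / y)) :=
    (hk.comp_div hy.ne').comp_add_right ((r : ℝ) / q)
  have hint : ∫ x : ℝ, k ((x + (r : ℝ) / q) / y) = C * (y * hhat ((n : ℝ) * y)) := by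
    rw [integral_add_right_eq_self (fun x : ℝ => k (x / y)) ((r : ℝ) / q),
      Measure.integral_comp_div, abs_of_pos hy]
    simp only [k]
    rw [integral_const_mul, hhat, Complex.real_smul]
    ring
  have h := hF.hasSum_intervalIntegral_comp_add_int
  rw [hint] at h
  convert! h using 2 with m
  unfold GG
  apply intervalIntegral.integral_congr
  intro x _
  simp only [k, C, fullTerm]
  have e1 : (x + (((m * (q : ℕ) + r : ℤ)) : ℝ) / (q : ℝ)) = x + m + (r : ℝ) / q := by
    push_cast; field_simp; ring
  rw [e1]
  have e2 : Complex.exp (-2 * π * Complex.I * n * x) =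
      Complex.exp (2 * π * Complex.I * n / q) ^ r *
        Complex.exp (-2 * π * Complex.I * (((n : ℝ) * y : ℝ) : ℂ) *
          (((x + m + (r : ℝ) / q) / y : ℝ) : ℂ)) := by
    rw [← Complex.exp_nat_mul, ← Complex.exp_add, Complex.exp_eq_exp_iff_exists_int]
    refine ⟨n * m, ?_⟩
    push_cast
    field_simp
    ring
  rw [e2]
  push_cast
  ring

lemma root_sum (n : ℤ) (q : ℕ+) :
    ∑ r : Fin q, Complex.exp (2 * π * Complex.I * n / q) ^ (r : ℕ) =
      if (q : ℤ) ∣ n then (q : ℂ) else 0 := by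
  have hqC : (q : ℂ) ≠ 0 := by
    have : (q : ℝ) ≠ 0 := by positivity
    exact_mod_cast this
  have hpi : (2 * π * Complex.I : ℂ) ≠ 0 := Complex.two_pi_I_ne_zero
  set z := Complex.exp (2 * π * Complex.I * n / q) with hz
  rw [Fin.sum_univ_eq_sum_range (fun r => z ^ r)]
  split_ifs with hd
  · obtain ⟨k, hk⟩ := hd
    have : z = 1 := by
      rw [hz, Complex.exp_eq_one_iff]
      refine ⟨k, ?_⟩
      rw [hk]; push_cast; field_simp
    simp [this]
  · have hz1 : z ≠ 1 := by
      intro h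
      rw [hz, Complex.exp_eq_one_iff] at h
      obtain ⟨k, hk⟩ := h
      apply hd
      refine ⟨k, ?_⟩
      have : (n : ℂ) = q * k := by
        field_simp at hk
        exact hk
      exact_mod_cast this
    have hzq : z ^ (q : ℕ) = 1 := by
      rw [hz, ← Complex.exp_nat_mul, Complex.exp_eq_one_iff]
      refine ⟨n, ?_⟩
      field_simp
    have := mul_geom_sum z (q : ℕ)
    rw [hzq, sub_self] at this
    exact (mul_eq_zero.mp this).resolve_left (sub_ne_zero.mpr hz1)

lemma GG_hasSum (n : ℤ) {y : ℝ} (hy : 0 < y) :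
    HasSum (GG n y) (∫ x in (0:ℝ)..1, ((∑' a, fullTerm x y a : ℝ) : ℂ) *
      Complex.exp (-2 * π * Complex.I * n * x)) := by
  unfold GG
  apply intervalIntegral.hasSum_integral_of_dominated_convergence
    (bound := fun a _ => KK 1 y * bnd a)
  · intro a
    apply Continuous.aestronglyMeasurable
    have := hfun_cont
    unfold fullTerm
    fun_prop
  · intro a
    filter_upwards with x hx
    rw [Set.uIoc_of_le zero_le_one] at hx
    have : ‖Complex.exp (-2 * π * Complex.I * n * x)‖ = 1 := by
      have e : (-2 * π * Complex.I * n * x : ℂ) = ((-2 * π * n * x : ℝ) : ℂ) * Complex.I := by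
        push_cast; ring
      rw [e, Complex.norm_exp_ofReal_mul_I]
    rw [norm_mul, Complex.norm_real, this, mul_one]
    apply fullTerm_bound _ hy
    rw [abs_of_pos hx.1]; exact hx.2
  · filter_upwards with x _
    exact bnd_summable.mul_left _
  · simp
  · filter_upwards with x _
    have := (fullTerm_summable x hy).of_abs.hasSum
    exact ((Complex.hasSum_ofReal).mpr this).mul_right _

lemma GG_fiber (n : ℤ) {y : ℝ} (hy : 0 < y) (q : ℕ+) :
    ∑' p : ℤ, GG n y (q, p) =
      ((if (q : ℤ) ∣ n then ((q : ℝ) ^ 2)⁻¹ else 0 : ℝ) : ℂ) * (y * hhat ((n : ℝ) * y)) := by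
  have : NeZero (q : ℕ) := ⟨q.ne_zero⟩
  have hqC : (q : ℂ) ≠ 0 := by
    have : (q : ℝ) ≠ 0 := by positivity
    exact_mod_cast this
  have hs : Summable (fun p : ℤ => GG n y (q, p)) := (GG_hasSum n hy).summable.prod_factor q
  obtain ⟨e, he⟩ : ∃ e : Fin q × ℤ ≃ ℤ, ∀ (r : Fin q) (m : ℤ),
      e (r, m) = m * (q : ℕ) + ((r : ℕ) : ℤ) :=
    ⟨(Equiv.prodComm _ _).trans (Int.divModEquiv (q : ℕ)).symm, fun r m => rfl⟩
  have hs' : Summable (fun a : Fin q × ℤ => GG n y (q, e a)) := e.summable_iff.mpr hs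
  rw [← e.tsum_eq (fun p : ℤ => GG n y (q, p)), hs'.tsum_prod, tsum_fintype]
  have : ∀ r : Fin q, ∑' m : ℤ, GG n y (q, e (r, m)) =
      (((q : ℂ) ^ 3)⁻¹ * Complex.exp (2 * π * Complex.I * n / q) ^ (r : ℕ) *
        (y * hhat ((n : ℝ) * y))) := by
    intro r
    simp_rw [he]
    exact (GG_hasSum_int n hy q r).tsum_eq
  rw [Finset.sum_congr rfl (fun r _ => this r)]
  rw [← Finset.sum_mul, ← Finset.mul_sum, root_sum]
  congr 1
  split_ifs
  · push_cast; field_simp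
  · simp

lemma sigma_tsum (n : ℤ) :
    ∑' q : ℕ+, (if (q : ℤ) ∣ n then ((q : ℝ) ^ 2)⁻¹ else 0 : ℝ) = sigmaNeg2 n := by
  unfold sigmaNeg2
  split_ifs with hn
  · subst hn
    have := zetaR_nat 2
    simp only [dvd_zero, if_true]
    exact_mod_cast this.symm
  · let f : ℕ → ℝ := fun q => if (q : ℤ) ∣ n then ((q : ℝ) ^ 2)⁻¹ else 0
    have h1 : HasSum f (∑ d ∈ n.natAbs.divisors, f d) := by
      apply hasSum_sum_of_ne_finset_zero
      intro b hb
      simp only [f]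
      rw [if_neg]
      intro h
      apply hb
      rw [Nat.mem_divisors]
      exact ⟨Int.natCast_dvd.mp h, by simpa using hn⟩
    have h2 : HasSum (f ∘ ((↑) : ℕ+ → ℕ)) (∑ d ∈ n.natAbs.divisors, f d) := by
      rw [PNat.coe_injective.hasSum_iff]
      · exact h1
      · intro x hx
        have : x = 0 := by
          by_contra h
          exact hx ⟨⟨x, Nat.pos_of_ne_zero h⟩, rfl⟩
        subst this
        simp [f]
    refine h2.tsum_eq.trans ?_
    apply Finset.sum_congr rfl
    intro d hd
    simp only [f]
    rw [if_pos (Int.natCast_dvd.mpr (Nat.dvd_of_mem_divisors hd)), zpow_neg]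
    norm_cast

lemma full_fourier (n : ℤ) {y : ℝ} (hy : 0 < y) :
    ∫ x in (0:ℝ)..1, ((∑' a, fullTerm x y a : ℝ) : ℂ) *
      Complex.exp (-2 * π * Complex.I * n * x) = (sigmaNeg2 n : ℂ) * (y * hhat ((n : ℝ) * y)) := by
  have h := GG_hasSum n hy
  rw [← h.tsum_eq, h.summable.tsum_prod]
  simp_rw [GG_fiber n hy]
  rw [tsum_mul_right, ← sigma_tsum, Complex.ofReal_tsum]

/-- the sum defining `Φ` converges absolutely, and the `n`-th Fourier
coefficient of `Φ(·+iy)` equals `4ζ(3)σ₋₂(|n|)·y·ĥ(ny)`. -/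
theorem phi_fourier_coefficients :
    (∀ (x y : ℝ), 0 < y → Summable (fun pq : RatIdx => |PhiTerm x y pq|)) ∧
    (∀ (n : ℤ) (y : ℝ), 0 < y →
      (∫ x in (0:ℝ)..1,
          ((4 * zetaR 3 ^ 2 * ∑' pq : RatIdx, PhiTerm x y pq : ℝ) : ℂ) *
            Complex.exp (-2 * π * Complex.I * n * x)) =
        ((4 * zetaR 3 * sigmaNeg2 n * y : ℝ) : ℂ) * hhat ((n : ℝ) * y)) := by
  refine ⟨fun x y hy => phi_summable x hy, fun n y hy => ?_⟩
  have h := full_fourier n hy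
  have e : ∀ x : ℝ, ((4 * zetaR 3 ^ 2 * ∑' pq : RatIdx, PhiTerm x y pq : ℝ) : ℂ) *
      Complex.exp (-2 * π * Complex.I * n * x) = (4 * zetaR 3 : ℂ) *
      (((∑' a, fullTerm x y a : ℝ) : ℂ) * Complex.exp (-2 * π * Complex.I * n * x)) := by
    intro x
    rw [← zeta_mul_phi x hy]
    push_cast
    ring
  simp_rw [e]
  rw [intervalIntegral.integral_const_mul, h]
  push_cast
  ring
end
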